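/- Any run of a policy iteration algorithm with max-gain action selection on an n-state, k-action DMDP (n ≥ 2, k ≥ 2) terminates in at most (n+1)·n²·k·((k+1)!)^((n−1)/(k+1)) steps. Equivalently, every sequence of policies π_1 ≺ π_2 ≺ … ≺ π_ℓ in which each π_{i+1} is obtained from π_i by policy improvement with max-gain action selection satisfies ℓ ≤ (n+1)·n²·k·((k+1)!)^((n−1)/(k+1)). -/

import Mathlib

open scoped Classical
open Finset

/-- Number of directed cycles in a finite directed multigraph on `Fin n`
specified by the edge-multiplicity function `G`: self-loops are cycles of
length 1, cycles of length `≥ 2` correspond to cyclic permutations, parallel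
edges give distinct cycles, and cycles are counted up to cyclic rotation. -/
noncomputable def cycleCount (n : ℕ) (G : Fin n → Fin n → ℕ) : ℕ :=
  (∑ v, G v v) +
  ∑ σ : Equiv.Perm (Fin n), if σ.IsCycle then ∏ v ∈ σ.support, G v (σ v) else 0

/-- Number of path-cycle subgraphs of a finite directed multigraph with
multiplicity function `G`: a path-cycle subgraph is given by a nonempty
vertex set `s` together with a successor map `f` on `s` (extended by the
identity off `s`) whose functional digraph on `s` is weakly connected and
has at most one source (vertex of indegree zero); parallel edges give
distinct path-cycles. -/
noncomputable def pathCycleCount {V : Type*} [Fintype V] [DecidableEq V]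
    (G : V → V → ℕ) : ℕ :=
  ∑ s : Finset V, ∑ f : V → V,
    if s.Nonempty ∧ (∀ v, v ∉ s → f v = v) ∧ (∀ v ∈ s, f v ∈ s) ∧
        (∀ u ∈ s, ∀ v ∈ s,
          Relation.ReflTransGen (fun a b => (a ∈ s ∧ f a = b) ∨ (b ∈ s ∧ f b = a)) u v) ∧
        (s.filter fun v => ∀ u ∈ s, f u ≠ v).card ≤ 1
    then ∏ v ∈ s, G v (f v) else 0

/-- `α(k) = (k - 1 + √((k-1)² + 4)) / 2`. -/
noncomputable def alphaK (k : ℕ) : ℝ :=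
  ((k : ℝ) - 1 + Real.sqrt (((k : ℝ) - 1) ^ 2 + 4)) / 2

/-- Multiplicity function of the digraph `G_{n,k}`: on vertices `Fin n`,
edges `(i, i+1 mod n)` have multiplicity `k - 1` and edges `(i, i+2 mod n)`
have multiplicity `1`. -/
def GnkMult (n k : ℕ) : Fin n → Fin n → ℕ := fun i j =>
  if (j.val + n - i.val) % n = 1 then k - 1
  else if (j.val + n - i.val) % n = 2 then 1
  else 0

/-- Multiplicity function of the digraph `G'_{n,k}`: on vertices `Fin n`,
edges `(i, i+1 mod n)` have multiplicity `1` and edges `(i, i+2 mod n)`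
have multiplicity `k - 1`. -/
def Gnk'Mult (n k : ℕ) : Fin n → Fin n → ℕ := fun i j =>
  if (j.val + n - i.val) % n = 1 then 1
  else if (j.val + n - i.val) % n = 2 then k - 1
  else 0

/-- Edge relation of the simple digraph `G_m`: `(i, j)` is an edge whenever
`j - i ≡ 1 (mod m)` or `j - i ≡ 2 (mod m)`. -/
def GmRel (m : ℕ) : Fin m → Fin m → Prop := fun i j =>
  (j.val + m - i.val) % m = 1 ∨ (j.val + m - i.val) % m = 2

/-- The sequence `S_m` with `S_0 = 1`, `S_1 = k - 1`,
`S_m = (k-1) S_{m-1} + S_{m-2}`. -/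
def Sseq (k : ℕ) : ℕ → ℕ
  | 0 => 1
  | 1 => k - 1
  | (m + 2) => (k - 1) * Sseq k (m + 1) + Sseq k m

/-- `F_k(n)`: the maximum number of directed cycles over all digraphs on `n`
vertices with every outdegree exactly `k` in which every multi-edge between
distinct vertices has multiplicity at most `k - 1`. -/
noncomputable def Fk (k n : ℕ) : ℕ :=
  sSup {c : ℕ | ∃ G : Fin n → Fin n → ℕ,
    (∀ v, (∑ u, G v u) = k) ∧ (∀ u v : Fin n, u ≠ v → G u v ≤ k - 1) ∧
    c = cycleCount n G}

/-- Weak connectivity (same connected component) in a directed multigraph. -/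
def MConn {n : ℕ} (G : Fin n → Fin n → ℕ) : Fin n → Fin n → Prop :=
  Relation.ReflTransGen (fun a b => 0 < G a b ∨ 0 < G b a)

/-- A deterministic Markov decision problem with state space `S`, action
space `A` (all actions available at every state), deterministic transition
function `T`, reward function `R` and discount factor `gamma ∈ [0, 1)`. -/
structure DMDP (S A : Type*) where
  T : S → A → S
  R : S → A → ℝ
  gamma : ℝ
  gamma_nonneg : 0 ≤ gamma
  gamma_lt_one : gamma < 1

namespace DMDP

variable {S A : Type*}

/-- The trajectory of states obtained by following policy `π` from `s`. -/
def traj (M : DMDP S A) (π : S → A) (s : S) (t : ℕ) : S :=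
  (fun x => M.T x (π x))^[t] s

/-- The value function `V^π(s) = Σ_t γ^t R(s_t, π(s_t))`. -/
noncomputable def V (M : DMDP S A) (π : S → A) (s : S) : ℝ :=
  ∑' t : ℕ, M.gamma ^ t * M.R (M.traj π s t) (π (M.traj π s t))

/-- The action value function `Q^π(s, a) = R(s, a) + γ V^π(T(s, a))`. -/
noncomputable def Q (M : DMDP S A) (π : S → A) (s : S) (a : A) : ℝ :=
  M.R s a + M.gamma * M.V π (M.T s a)

/-- `π ≺ π'`: pointwise `V^π ≤ V^{π'}` with strict inequality somewhere. -/
def PLt (M : DMDP S A) (π π' : S → A) : Prop :=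
  (∀ s, M.V π s ≤ M.V π' s) ∧ ∃ s, M.V π s < M.V π' s

/-- `π'` is obtained from `π` by policy improvement with arbitrary action
selection. -/
def ImpStep (M : DMDP S A) (π π' : S → A) : Prop :=
  π' ≠ π ∧ ∀ s, π' s ≠ π s → M.V π s < M.Q π s (π' s)

/-- `π'` is obtained from `π` by policy improvement with max-gain action
selection. -/
def MaxGainStep (M : DMDP S A) (π π' : S → A) : Prop :=
  π' ≠ π ∧ ∀ s, π' s ≠ π s →
    M.V π s < M.Q π s (π' s) ∧
    ∀ a, M.V π s < M.Q π s a → M.Q π s a ≤ M.Q π s (π' s)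

/-- The first time step at which a previously visited state recurs on the
trajectory of `π` from `s`. -/
noncomputable def pcLen (M : DMDP S A) (π : S → A) (s : S) : ℕ :=
  sInf {t : ℕ | ∃ t' < t, M.traj π s t' = M.traj π s t}

/-- The path-cycle `P^π_s`: the sequence of state–action–state triples
`(s_t, π(s_t), s_{t+1})` for `t` up to (but excluding) the first recurrence
of a previously visited state. -/
noncomputable def pathCycle (M : DMDP S A) (π : S → A) (s : S) : List (S × A × S) :=
  (List.range (M.pcLen π s)).map fun t =>
    (M.traj π s t, π (M.traj π s t), M.traj π s (t + 1))

/-- The multiplicity function of the DMDP digraph `G_M`: one edge from `s`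
to `T(s, a)` for every action `a`. -/
noncomputable def digraph (M : DMDP S A) [Fintype A] : S → S → ℕ :=
  fun s s' => (Finset.univ.filter fun a => M.T s a = s').card

/-- A state is non-branching if all actions lead to the same next state. -/
def NonBranching (M : DMDP S A) (s : S) : Prop := ∃ s', ∀ a, M.T s a = s'

/-- The relation `∼` on path-cycles: same sequence of states, and wherever
the actions differ the state is non-branching. -/
def PCSim (M : DMDP S A) (P₁ P₂ : List (S × A × S)) : Prop :=
  P₁.length = P₂.length ∧
  ∀ (t : ℕ) (h₁ : t < P₁.length) (h₂ : t < P₂.length),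
    (P₁.get ⟨t, h₁⟩).1 = (P₂.get ⟨t, h₂⟩).1 ∧
    (P₁.get ⟨t, h₁⟩).2.2 = (P₂.get ⟨t, h₂⟩).2.2 ∧
    ((P₁.get ⟨t, h₁⟩).2.1 ≠ (P₂.get ⟨t, h₂⟩).2.1 → M.NonBranching (P₁.get ⟨t, h₁⟩).1)

/-- The relation `≈` on path-cycles: they differ only in equivalent edges,
i.e. have the same sequences of source and target states. -/
def PCApprox (_M : DMDP S A) (P₁ P₂ : List (S × A × S)) : Prop :=
  P₁.length = P₂.length ∧
  ∀ (t : ℕ) (h₁ : t < P₁.length) (h₂ : t < P₂.length),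
    (P₁.get ⟨t, h₁⟩).1 = (P₂.get ⟨t, h₂⟩).1 ∧
    (P₁.get ⟨t, h₁⟩).2.2 = (P₂.get ⟨t, h₂⟩).2.2

end DMDP

/-!
The value `V π s` depends only on the trajectory of `π` from `s` and on the rewards collected on it.
Suppose the policies `i < j` of the run have the same set of states that were never switched up to
their time. Where both take a transition `x → y`, they earn the same reward: at a never-switched
state both take the initial action, and at a switched one both take a best action among those
leading to `y`. Hence, at a state `s` where step `i` strictly improves the value, the trajectories
of the two policies differ. As the sets of never-switched states decrease, at most `n + 1` of them
occur, and the length of the run is at most `n + 1` times the number of trajectories.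

A trajectory is a simple path from `s` to some `u` followed by an action at `u` leading back into
the path. Closing the path up by `u ↦ s` and fixing all other states gives a permutation along the
graph of the DMDP with self-loops added and with `s` as the only successor of `u`. For each of the
`n² k` choices of `s`, `u` and the action at `u`, Brègman's theorem bounds the number of these
permutations by `((k + 1)!) ^ ((n - 1) / (k + 1))`.
-/

/-! ### Brègman's theorem -/

/-- The systems of distinct representatives of a family of finite sets (the objects of Hall's
theorem). For a family of `n` subsets of an `n`-element set their number is the permanent of the
incidence matrix. -/
noncomputable def distinctReps {ι β : Type*} [Fintype ι] (N : ι → Finset β) : Finset (ι → β) :=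
  (Fintype.piFinset N).filter Function.Injective

/-- The logarithm of `(r!) ^ (1 / r)`, the factor by which Brègman's theorem bounds the contribution
of a row with `r` ones; it is `0` at `r = 0`. -/
noncomputable def logFactorialMean (r : ℕ) : ℝ := Real.log r.factorial / r

lemma mul_logFactorialMean (r : ℕ) :
    (r : ℝ) * logFactorialMean r = Real.log r.factorial := by
  rcases eq_or_ne r 0 with rfl | hr
  · simp
  · exact mul_div_cancel₀ _ (Nat.cast_ne_zero.mpr hr)

lemma logFactorialMean_one : logFactorialMean 1 = 0 := by
  simp [logFactorialMean]

lemma log_factorial_succ (r : ℕ) :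
    Real.log (r + 1).factorial = Real.log (r + 1) + Real.log r.factorial := by
  rw [Nat.factorial_succ, Nat.cast_mul, Real.log_mul (by positivity) (by positivity),
    Nat.cast_succ]

lemma logFactorialMean_mono : Monotone logFactorialMean := by
  refine monotone_nat_of_le_succ fun r => ?_
  rcases Nat.eq_zero_or_pos r with rfl | hpos
  · simp [logFactorialMean]
  have hle : Real.log r.factorial ≤ r * Real.log (r + 1) := by
    rw [← Real.log_pow]
    refine Real.log_le_log (by positivity) ?_
    exact_mod_cast (Nat.factorial_le_pow r).trans (Nat.pow_le_pow_left r.le_succ r)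
  have hr : (0 : ℝ) < r := Nat.cast_pos.mpr hpos
  unfold logFactorialMean
  rw [log_factorial_succ, div_le_div_iff₀ hr (by positivity)]
  push_cast
  linarith

section Bregman

variable {ι β : Type*}

/-- The chain rule of entropy, with the entropy of `g` bounded by `log #t` and that of a fibre
bounded by `b`. -/
lemma card_mul_log_card_le {α : Type*} {s : Finset α} {t : Finset β} {g : α → β} {b : β → ℝ}
    (hg : ∀ x ∈ s, g x ∈ t)
    (hb : ∀ k ∈ t, ((s.filter fun x => g x = k).card : ℝ) ≤ Real.exp (b k)) :
    (s.card : ℝ) * Real.log s.card ≤ s.card * Real.log t.card + ∑ x ∈ s, b (g x) := by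
  rcases s.eq_empty_or_nonempty with rfl | hs
  · simp
  have hs_pos : (0 : ℝ) < s.card := Nat.cast_pos.mpr hs.card_pos
  have ht_pos : (0 : ℝ) < t.card :=
    Nat.cast_pos.mpr (Finset.card_pos.mpr ⟨_, hg _ hs.choose_spec⟩)
  have hfibres : ∑ x ∈ s, Real.exp (-b (g x)) ≤ t.card :=
    calc ∑ x ∈ s, Real.exp (-b (g x))
        = ∑ k ∈ t, (s.filter fun x => g x = k).card * Real.exp (-b k) := by
          simp only [← Finset.sum_fiberwise_of_maps_to' hg fun k => Real.exp (-b k),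
            Finset.sum_const, nsmul_eq_mul]
      _ ≤ ∑ k ∈ t, Real.exp (b k) * Real.exp (-b k) := by
          gcongr with k hk
          exact hb k hk
      _ = t.card := by simp [← Real.exp_add]
  set c := Real.log s.card - Real.log t.card with hc
  have hexp : Real.exp c = s.card / t.card := by
    rw [hc, Real.exp_sub, Real.exp_log hs_pos, Real.exp_log ht_pos]
  have htangent : ∑ x ∈ s, (c - b (g x) + 1) ≤ s.card :=
    calc ∑ x ∈ s, (c - b (g x) + 1)
        ≤ ∑ x ∈ s, Real.exp (c - b (g x)) := Finset.sum_le_sum fun x _ => Real.add_one_le_exp _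
      _ = s.card / t.card * ∑ x ∈ s, Real.exp (-b (g x)) := by
          simp only [sub_eq_add_neg c, Real.exp_add, hexp, Finset.mul_sum]
      _ ≤ s.card / t.card * t.card := by gcongr
      _ = s.card := div_mul_cancel₀ _ ht_pos.ne'
  simp only [Finset.sum_add_distrib, Finset.sum_sub_distrib, Finset.sum_const, nsmul_eq_mul,
    mul_one] at htangent
  rw [hc, mul_sub] at htangent
  linarith

variable [Fintype ι] {N : ι → Finset β}

lemma mem_distinctReps {f : ι → β} :
    f ∈ distinctReps N ↔ (∀ i, f i ∈ N i) ∧ Function.Injective f := by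
  simp [distinctReps]

lemma card_filter_distinctReps_le (N : ι → Finset β) (i : ι) (k : β) :
    ((distinctReps N).filter fun f => f i = k).card ≤
      (distinctReps fun j : {j // j ≠ i} => (N j).erase k).card := by
  refine Finset.card_le_card_of_injOn (fun f j => f j) (fun f hf => ?_) fun f hf g hg hfg => ?_
  · simp only [Finset.coe_filter, Set.mem_ofPred_eq, mem_distinctReps] at hf
    obtain ⟨⟨hfN, hinj⟩, rfl⟩ := hf
    exact mem_distinctReps.mpr
      ⟨fun j => Finset.mem_erase.mpr ⟨hinj.ne j.2, hfN j⟩, hinj.comp Subtype.val_injective⟩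
  · simp only [Finset.coe_filter, Set.mem_ofPred_eq] at hf hg
    funext j
    by_cases hj : j = i
    · rw [hj, hf.2, hg.2]
    · exact congrFun hfg ⟨j, hj⟩

lemma card_biUnion_erase_le {i : ι} {k : β} (hk : k ∈ N i) :
    (univ.biUnion fun j : {j // j ≠ i} => (N j).erase k).card ≤ (univ.biUnion N).card - 1 := by
  rw [← Finset.card_erase_of_mem (Finset.mem_biUnion.mpr ⟨i, Finset.mem_univ i, hk⟩)]
  refine Finset.card_le_card (Finset.biUnion_subset.mpr fun j _ => ?_)
  exact Finset.erase_subset_erase k (Finset.subset_biUnion_of_mem N (Finset.mem_univ (j : ι)))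

lemma image_eq_biUnion_of_mem_distinctReps (hN : (univ.biUnion N).card ≤ Fintype.card ι)
    {f : ι → β} (hf : f ∈ distinctReps N) : univ.image f = univ.biUnion N := by
  obtain ⟨hfN, hinj⟩ := mem_distinctReps.mp hf
  refine Finset.eq_of_subset_of_card_le (Finset.image_subset_iff.mpr fun i _ => ?_) ?_
  · exact Finset.mem_biUnion.mpr ⟨i, Finset.mem_univ i, hfN i⟩
  · rwa [Finset.card_image_of_injective _ hinj, Finset.card_univ]

lemma card_filter_apply_mem_of_mem_distinctReps (hN : (univ.biUnion N).card ≤ Fintype.card ι)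
    {f : ι → β} (hf : f ∈ distinctReps N) (j : ι) :
    (univ.filter fun i => f i ∈ N j).card = (N j).card := by
  rw [← Finset.card_image_of_injective _ (mem_distinctReps.mp hf).2,
    ← Finset.filter_image (p := (· ∈ N j)), image_eq_biUnion_of_mem_distinctReps hN hf,
    Finset.filter_mem_eq_inter,
    Finset.inter_eq_right.mpr (Finset.subset_biUnion_of_mem N (Finset.mem_univ j))]

/-- Among the sets `(N j).erase (f i)` with `i ≠ j`, exactly `#(N j) - 1` are smaller than `N j`,
whatever `f` is. -/
lemma sum_logFactorialMean_erase (hN : (univ.biUnion N).card ≤ Fintype.card ι)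
    {f : ι → β} (hf : f ∈ distinctReps N) (j : ι) :
    ∑ i ∈ univ.erase j, logFactorialMean ((N j).erase (f i)).card =
      Fintype.card ι * logFactorialMean (N j).card - Real.log (N j).card := by
  have hfj := (mem_distinctReps.mp hf).1 j
  have hcount := card_filter_apply_mem_of_mem_distinctReps hN hf j
  obtain ⟨r, hr⟩ : ∃ r, (N j).card = r + 1 :=
    Nat.exists_eq_succ_of_ne_zero (Finset.card_pos.mpr ⟨_, hfj⟩).ne'
  have hsummand (i : ι) : logFactorialMean ((N j).erase (f i)).card =
      logFactorialMean (r + 1) -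
        if f i ∈ N j then logFactorialMean (r + 1) - logFactorialMean r else 0 := by
    split_ifs with hi
    · rw [Finset.card_erase_of_mem hi, hr, Nat.add_sub_cancel]
      ring
    · rw [Finset.erase_eq_of_notMem hi, hr, sub_zero]
  rw [hr] at hcount ⊢
  have hall : ∑ i, logFactorialMean ((N j).erase (f i)).card =
      Fintype.card ι * logFactorialMean (r + 1) -
        ((r + 1 : ℕ) * logFactorialMean (r + 1) - (r + 1 : ℕ) * logFactorialMean r) := by
    simp only [hsummand, Finset.sum_sub_distrib, Finset.sum_const, ← Finset.sum_filter, hcount,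
      Finset.card_univ, nsmul_eq_mul]
  rw [← Finset.add_sum_erase _ _ (Finset.mem_univ j), Finset.card_erase_of_mem hfj, hr,
    Nat.add_sub_cancel, mul_logFactorialMean, log_factorial_succ,
    ← mul_logFactorialMean r] at hall
  push_cast at hall ⊢
  linarith

lemma sum_sum_logFactorialMean_erase (hN : (univ.biUnion N).card ≤ Fintype.card ι)
    {f : ι → β} (hf : f ∈ distinctReps N) :
    ∑ i, ∑ j : {j // j ≠ i}, logFactorialMean ((N j).erase (f i)).card =
      ∑ j, (Fintype.card ι * logFactorialMean (N j).card - Real.log (N j).card) :=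
  calc ∑ i, ∑ j : {j // j ≠ i}, logFactorialMean ((N j).erase (f i)).card
      = ∑ i, ∑ j ∈ univ.erase i, logFactorialMean ((N j).erase (f i)).card :=
        Finset.sum_congr rfl fun i _ => (Finset.sum_subtype (univ.erase i) (by simp)
          fun j => logFactorialMean ((N j).erase (f i)).card).symm
    _ = ∑ j, ∑ i ∈ univ.erase j, logFactorialMean ((N j).erase (f i)).card :=
        Finset.sum_comm' (by simp [ne_comm])
    _ = _ := Finset.sum_congr rfl fun j _ => sum_logFactorialMean_erase hN hf j

/-- The averaging step of Schrijver's proof of Brègman's theorem: if all minors satisfy the bound,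
then so does the family. -/
lemma card_distinctReps_le_exp_of_minors [Nonempty ι] (hN : (univ.biUnion N).card ≤ Fintype.card ι)
    (hminor : ∀ i, ∀ k ∈ N i, ((distinctReps fun j : {j // j ≠ i} => (N j).erase k).card : ℝ) ≤
      Real.exp (∑ j : {j // j ≠ i}, logFactorialMean ((N j).erase k).card)) :
    ((distinctReps N).card : ℝ) ≤ Real.exp (∑ i, logFactorialMean (N i).card) := by
  set P := ((distinctReps N).card : ℝ) with hP
  have P_nonneg : 0 ≤ P := Nat.cast_nonneg _
  have hrow (i : ι) : P * Real.log P ≤ P * Real.log (N i).card +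
      ∑ f ∈ distinctReps N, ∑ j : {j // j ≠ i}, logFactorialMean ((N j).erase (f i)).card := by
    have hfibre (k : β) (hk : k ∈ N i) : (((distinctReps N).filter fun f => f i = k).card : ℝ) ≤
        Real.exp (∑ j : {j // j ≠ i}, logFactorialMean ((N j).erase k).card) :=
      (Nat.cast_le.mpr (card_filter_distinctReps_le N i k)).trans (hminor i k hk)
    exact card_mul_log_card_le (g := fun f : ι → β => f i)
      (fun f hf => (mem_distinctReps.mp hf).1 i) hfibre
  have htotal : Fintype.card ι * (P * Real.log P) ≤
      Fintype.card ι * (P * ∑ i, logFactorialMean (N i).card) :=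
    calc Fintype.card ι * (P * Real.log P)
        = ∑ _i : ι, P * Real.log P := by simp
      _ ≤ ∑ i, (P * Real.log (N i).card + ∑ f ∈ distinctReps N,
            ∑ j : {j // j ≠ i}, logFactorialMean ((N j).erase (f i)).card) :=
          Finset.sum_le_sum fun i _ => hrow i
      _ = P * ∑ i, Real.log (N i).card + ∑ _f ∈ distinctReps N,
            ∑ j, (Fintype.card ι * logFactorialMean (N j).card - Real.log (N j).card) := by
          rw [Finset.sum_add_distrib, ← Finset.mul_sum, Finset.sum_comm]
          congr 1
          exact Finset.sum_congr rfl fun _ hf => sum_sum_logFactorialMean_erase hN hf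
      _ = Fintype.card ι * (P * ∑ i, logFactorialMean (N i).card) := by
          rw [Finset.sum_const, nsmul_eq_mul, ← hP, Finset.sum_sub_distrib, ← Finset.mul_sum]
          ring
  rcases P_nonneg.eq_or_lt with hP0 | hPpos
  · exact hP0 ▸ (Real.exp_pos _).le
  rw [← Real.log_le_iff_le_exp hPpos]
  have hcard : (0 : ℝ) < Fintype.card ι := Nat.cast_pos.mpr Fintype.card_pos
  exact le_of_mul_le_mul_left (le_of_mul_le_mul_left htotal hcard) hPpos

/-- Brègman's theorem, with the product of the `(r!) ^ (1 / r)` written as an exponential. -/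
theorem card_distinctReps_le_exp {ι : Type*} [Fintype ι] (N : ι → Finset β)
    (hN : (univ.biUnion N).card ≤ Fintype.card ι) :
    ((distinctReps N).card : ℝ) ≤ Real.exp (∑ i, logFactorialMean (N i).card) := by
  induction hm : Fintype.card ι generalizing ι with
  | zero =>
    have := Fintype.card_eq_zero_iff.mp hm
    have hle : (distinctReps N).card ≤ 1 := Finset.card_le_one_of_subsingleton _
    simpa using hle
  | succ m ih =>
    have : Nonempty ι := Fintype.card_pos_iff.mp (by omega)
    refine card_distinctReps_le_exp_of_minors hN fun i k hk => ?_
    have hcard : Fintype.card {j // j ≠ i} = m := by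
      rw [Fintype.card_subtype_compl, Fintype.card_subtype_eq, hm, Nat.add_sub_cancel]
    refine ih _ ?_ hcard
    have := card_biUnion_erase_le hk
    omega

lemma card_distinctReps_le_factorial_rpow (hN : (univ.biUnion N).card ≤ Fintype.card ι) {d : ℕ}
    (hd : ∀ i, (N i).card ≤ d) {u : ι} (hu : (N u).card = 1) :
    ((distinctReps N).card : ℝ) ≤ (d.factorial : ℝ) ^ (((Fintype.card ι : ℝ) - 1) / d) := by
  have hcard : ((univ.erase u).card : ℝ) = Fintype.card ι - 1 := by
    rw [Finset.card_erase_of_mem (Finset.mem_univ u), Finset.card_univ,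
      Nat.cast_pred (Fintype.card_pos_iff.mpr ⟨u⟩)]
  have hsum : ∑ i, logFactorialMean (N i).card ≤ (Fintype.card ι - 1) * logFactorialMean d := by
    rw [← Finset.add_sum_erase _ _ (Finset.mem_univ u), hu, logFactorialMean_one, zero_add, ← hcard,
      ← nsmul_eq_mul]
    exact Finset.sum_le_card_nsmul _ _ _ fun i _ => logFactorialMean_mono (hd i)
  calc ((distinctReps N).card : ℝ)
      ≤ Real.exp (∑ i, logFactorialMean (N i).card) := card_distinctReps_le_exp N hN
    _ ≤ Real.exp ((Fintype.card ι - 1) * logFactorialMean d) := Real.exp_le_exp.mpr hsum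
    _ = (d.factorial : ℝ) ^ (((Fintype.card ι : ℝ) - 1) / d) := by
      rw [Real.rpow_def_of_pos (by positivity), logFactorialMean]
      ring_nf

end Bregman

/-! ### Orbits of self-maps of a finite type -/

lemma exists_forall_ne_and_range_eq_image_Iic {α : Type*} [Finite α] (a : ℕ → α) :
    ∃ m, (∀ i < m, a i ≠ a m) ∧ Set.range a = a '' Set.Iic m := by
  have hvisit (x : Set.range a) : ∃ t, a t = x := x.2
  obtain ⟨x, hx⟩ := Finite.exists_max fun x => Nat.find (hvisit x)
  refine ⟨Nat.find (hvisit x), fun i hi h => ?_, ?_⟩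
  · exact Nat.find_min (hvisit x) hi (h.trans (Nat.find_spec (hvisit x)))
  · refine (Set.image_subset_range _ _).antisymm' fun y hy => ?_
    exact ⟨_, hx ⟨y, hy⟩, Nat.find_spec (hvisit ⟨y, hy⟩)⟩

/-- Here `u` is the point that the orbit of `s` visits last among all first visits: `σ` follows the
simple path from `s` to `u` and closes it up to a cycle. -/
lemma exists_injective_closing_orbit {α : Type*} [Finite α] (f : α → α) (s : α) :
    ∃ (u : α) (σ : α → α), Function.Injective σ ∧ σ u = s ∧ (∀ x ≠ u, σ x = x ∨ σ x = f x) ∧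
      ∀ t, f^[t] s = (Function.update σ u (f u))^[t] s := by
  obtain ⟨m, hm, hrange⟩ := exists_forall_ne_and_range_eq_image_Iic fun t => f^[t] s
  set u := f^[m] s
  set orbit := Set.range fun t => f^[t] s
  let σ x := if x = u then s else if x ∈ orbit then f x else x
  have hσ_orbit (t : ℕ) (ht : f^[t] s ≠ u) : σ (f^[t] s) = f (f^[t] s) := by
    simp only [σ, if_neg ht, if_pos (show f^[t] s ∈ orbit from ⟨t, rfl⟩)]
  refine ⟨u, σ, Finite.injective_iff_surjective.mpr fun y => ?_, if_pos rfl, fun x hx => ?_,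
    fun t => ?_⟩
  · by_cases hy : y ∈ orbit
    · obtain ⟨i, hi, rfl⟩ := hrange ▸ hy
      cases i with
      | zero => exact ⟨u, if_pos rfl⟩
      | succ i =>
        exact ⟨f^[i] s, (hσ_orbit i (hm i hi)).trans (Function.iterate_succ_apply' f i s).symm⟩
    · have hyu : y ≠ u := fun h => hy (h ▸ ⟨m, rfl⟩)
      exact ⟨y, by simp only [σ, if_neg hyu, if_neg hy]⟩
  · simp only [σ, if_neg hx]
    split_ifs
    exacts [Or.inr rfl, Or.inl rfl]
  · induction t with
    | zero => rfl
    | succ t ih =>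
      rw [Function.iterate_succ_apply', Function.iterate_succ_apply', ← ih]
      by_cases ht : f^[t] s = u
      · rw [ht, Function.update_self]
      · rw [Function.update_of_ne ht, hσ_orbit t ht]

/-! ### Runs of policy iteration -/

lemma exists_forall_lt_of_strictMonoOn {S β : Type*} [Nonempty S] [Preorder β] {v : ℕ → S → β}
    {ℓ : ℕ} (hv : StrictMonoOn v (Set.Iio ℓ)) (i : ℕ) :
    ∃ s, ∀ j, i < j → j < ℓ → v i s < v j s := by
  by_cases hi : i + 1 < ℓ
  · have hlt : v i < v (i + 1) := hv (i.lt_succ_self.trans hi) hi i.lt_succ_self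
    obtain ⟨s, hs⟩ := (Pi.lt_def.mp hlt).2
    exact ⟨s, fun j hij hj => hs.trans_le (hv.monotoneOn hi hj hij s)⟩
  · exact ⟨Classical.arbitrary S, fun j hij hj => by omega⟩

namespace DMDP

variable {S A : Type*} {M : DMDP S A} {π : ℕ → S → A} {ℓ i j : ℕ}

/-- `π'` switches only to actions of largest reward among the actions with the same transition. This
is all that the bound needs to know about the action selection. -/
def BestParallelSwitch (M : DMDP S A) (π π' : S → A) : Prop :=
  ∀ s, π' s ≠ π s → ∀ a, M.T s a = M.T s (π' s) → M.R s a ≤ M.R s (π' s)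

lemma MaxGainStep.bestParallelSwitch {π π' : S → A} (h : M.MaxGainStep π π') :
    M.BestParallelSwitch π π' := by
  intro s hs a ha
  obtain ⟨himp, hmax⟩ := h.2 s hs
  by_contra! hR
  have hQ : M.Q π s (π' s) < M.Q π s a := by
    unfold Q
    rw [ha]
    gcongr
  exact (hmax a (himp.trans hQ)).not_gt hQ

lemma pLt_iff_V_lt {π π' : S → A} : M.PLt π π' ↔ M.V π < M.V π' :=
  Pi.lt_def.symm

lemma strictMonoOn_V (hchain : ∀ i, i + 1 < ℓ → M.PLt (π i) (π (i + 1))) :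
    StrictMonoOn (fun i => M.V (π i)) (Set.Iio ℓ) :=
  strictMonoOn_of_lt_add_one Set.ordConnected_Iio fun i _ _ hi => pLt_iff_V_lt.mp (hchain i hi)

lemma traj_succ (M : DMDP S A) (π : S → A) (s : S) (t : ℕ) :
    M.traj π s (t + 1) = M.T (M.traj π s t) (π (M.traj π s t)) :=
  Function.iterate_succ_apply' _ t s

lemma V_eq_of_traj_eq {π π' : S → A} {s : S} (htraj : M.traj π s = M.traj π' s)
    (hR : ∀ x, M.T x (π x) = M.T x (π' x) → M.R x (π x) = M.R x (π' x)) :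
    M.V π s = M.V π' s := by
  refine tsum_congr fun t => ?_
  have hnext := congrFun htraj (t + 1)
  rw [traj_succ, traj_succ, ← htraj] at hnext
  rw [← htraj, hR _ hnext]

section Unswitched

variable [Fintype S]

/-- The states at which the policies `π 1, …, π i` all agree with `π 0`. -/
noncomputable def unswitched (π : ℕ → S → A) (i : ℕ) : Finset S :=
  univ.filter fun x => ∀ j ≤ i, π j x = π 0 x

lemma mem_unswitched {x : S} : x ∈ unswitched π i ↔ ∀ j ≤ i, π j x = π 0 x := by
  simp [unswitched]

lemma unswitched_antitone (π : ℕ → S → A) : Antitone (unswitched π) := fun _ _ hij _ hx =>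
  mem_unswitched.mpr fun l hl => mem_unswitched.mp hx l (hl.trans hij)

lemma reward_le_of_notMem_unswitched
    (hswitch : ∀ i, i + 1 < ℓ → M.BestParallelSwitch (π i) (π (i + 1))) (hi : i < ℓ) {x : S}
    (hx : x ∉ unswitched π i) {a : A} (ha : M.T x a = M.T x (π i x)) :
    M.R x a ≤ M.R x (π i x) := by
  induction i with
  | zero => exact absurd (mem_unswitched.mpr fun j hj => by rw [Nat.le_zero.mp hj]) hx
  | succ i ih =>
    by_cases hkeep : π (i + 1) x = π i x
    · have hx' : x ∉ unswitched π i := fun hmem => hx <| mem_unswitched.mpr fun j hj => by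
        rcases Nat.le_succ_iff.mp hj with hj | rfl
        · exact mem_unswitched.mp hmem j hj
        · exact hkeep.trans (mem_unswitched.mp hmem i le_rfl)
      rw [hkeep] at ha ⊢
      exact ih (Nat.lt_of_succ_lt hi) hx' ha
    · exact hswitch i hi x hkeep a ha

lemma reward_eq_of_unswitched_eq
    (hswitch : ∀ i, i + 1 < ℓ → M.BestParallelSwitch (π i) (π (i + 1))) (hi : i < ℓ) (hj : j < ℓ)
    (hU : unswitched π i = unswitched π j) {x : S} (hT : M.T x (π i x) = M.T x (π j x)) :
    M.R x (π i x) = M.R x (π j x) := by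
  by_cases hx : x ∈ unswitched π i
  · rw [mem_unswitched.mp hx i le_rfl, mem_unswitched.mp (hU ▸ hx : x ∈ unswitched π j) j le_rfl]
  · exact (reward_le_of_notMem_unswitched hswitch hj (hU ▸ hx) hT).antisymm
      (reward_le_of_notMem_unswitched hswitch hi hx hT.symm)

lemma traj_ne_of_V_lt (hswitch : ∀ i, i + 1 < ℓ → M.BestParallelSwitch (π i) (π (i + 1)))
    (hij : i < j) (hj : j < ℓ) (hcard : (unswitched π i).card = (unswitched π j).card) {s : S}
    (hV : M.V (π i) s < M.V (π j) s) : M.traj (π i) s ≠ M.traj (π j) s := by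
  intro htraj
  have hU : unswitched π i = unswitched π j :=
    (Finset.eq_of_subset_of_card_le (unswitched_antitone π hij.le) hcard.le).symm
  exact hV.ne (V_eq_of_traj_eq htraj fun x hT =>
    reward_eq_of_unswitched_eq hswitch (hij.trans hj) hj hU hT)

end Unswitched

section Trajectories

variable [Fintype A]

/-- Successor sets of the graph of `M` with a self-loop added everywhere, and with `s` as the only
successor of `u`. -/
noncomputable def closingSuccessors (M : DMDP S A) (s u : S) : S → Finset S :=
  Function.update (fun x => insert x (univ.image (M.T x))) u {s}

lemma card_closingSuccessors_le (M : DMDP S A) (s u x : S) :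
    (M.closingSuccessors s u x).card ≤ Fintype.card A + 1 := by
  rcases eq_or_ne x u with rfl | hx
  · simp [closingSuccessors]
  · rw [closingSuccessors, Function.update_of_ne hx]
    exact (Finset.card_insert_le _ _).trans (Nat.succ_le_succ Finset.card_image_le)

variable [Fintype S]

/-- The trajectories of all policies from all states. They correspond to the path-cycles of `M`, up
to the choice among actions with the same transition. -/
noncomputable def trajectories (M : DMDP S A) : Finset (ℕ → S) :=
  univ.image fun p : (S → A) × S => M.traj p.1 p.2

lemma traj_mem_trajectories (π : S → A) (s : S) : M.traj π s ∈ M.trajectories :=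
  Finset.mem_image.mpr ⟨(π, s), Finset.mem_univ _, rfl⟩

/-- The state sequences from `s` that take action `a` at `u` and follow a permutation `σ` allowed by
`closingSuccessors` at all other states: opening `σ` up at `u` recovers a path-cycle. -/
noncomputable def trajectoriesVia (M : DMDP S A) (s u : S) (a : A) : Finset (ℕ → S) :=
  (distinctReps (M.closingSuccessors s u)).image fun σ t => (Function.update σ u (M.T u a))^[t] s

lemma card_trajectoriesVia_le (M : DMDP S A) (s u : S) (a : A) :
    ((M.trajectoriesVia s u a).card : ℝ) ≤ ((Fintype.card A + 1).factorial : ℝ) ^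
      (((Fintype.card S : ℝ) - 1) / ((Fintype.card A : ℝ) + 1)) := by
  have hbregman := card_distinctReps_le_factorial_rpow (N := M.closingSuccessors s u)
    (Finset.card_le_univ _) (M.card_closingSuccessors_le s u) (u := u) (by simp [closingSuccessors])
  push_cast at hbregman
  exact (Nat.cast_le.mpr Finset.card_image_le).trans hbregman

lemma exists_traj_mem_trajectoriesVia (M : DMDP S A) (π : S → A) (s : S) :
    ∃ u, M.traj π s ∈ M.trajectoriesVia s u (π u) := by
  obtain ⟨u, σ, hinj, hu, hσ, ht⟩ := exists_injective_closing_orbit (fun x => M.T x (π x)) s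
  refine ⟨u, Finset.mem_image.mpr ⟨σ, mem_distinctReps.mpr ⟨?_, hinj⟩, funext fun t => (ht t).symm⟩⟩
  refine (Function.forall_update_iff _ fun x B => σ x ∈ B).mpr ⟨by simp [hu], fun x hx => ?_⟩
  rcases hσ x hx with h | h <;> simp [h]

lemma card_trajectories_le (M : DMDP S A) :
    (M.trajectories.card : ℝ) ≤ (Fintype.card S : ℝ) ^ 2 * Fintype.card A *
      ((Fintype.card A + 1).factorial : ℝ) ^
        (((Fintype.card S : ℝ) - 1) / ((Fintype.card A : ℝ) + 1)) := by
  have hcover : M.trajectories ⊆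
      univ.biUnion fun c : S × S × A => M.trajectoriesVia c.1 c.2.1 c.2.2 :=
    Finset.image_subset_iff.mpr fun ⟨π, s⟩ _ =>
      let ⟨u, hu⟩ := M.exists_traj_mem_trajectoriesVia π s
      Finset.mem_biUnion.mpr ⟨(s, u, π u), Finset.mem_univ _, hu⟩
  calc (M.trajectories.card : ℝ)
      ≤ ∑ c : S × S × A, ((M.trajectoriesVia c.1 c.2.1 c.2.2).card : ℝ) := by
        exact_mod_cast (Finset.card_le_card hcover).trans Finset.card_biUnion_le
    _ ≤ _ := Finset.sum_le_card_nsmul _ _ _ fun c _ => M.card_trajectoriesVia_le c.1 c.2.1 c.2.2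
    _ = _ := by
      rw [Finset.card_univ, Fintype.card_prod, Fintype.card_prod, nsmul_eq_mul]
      push_cast
      ring

lemma length_le_card_add_one_mul_card_trajectories [Nonempty S]
    (hchain : ∀ i, i + 1 < ℓ → M.PLt (π i) (π (i + 1)))
    (hswitch : ∀ i, i + 1 < ℓ → M.BestParallelSwitch (π i) (π (i + 1))) :
    ℓ ≤ (Fintype.card S + 1) * M.trajectories.card := by
  choose s hs using exists_forall_lt_of_strictMonoOn (strictMonoOn_V hchain)
  let code i := ((unswitched π i).card, M.traj (π i) (s i))
  have hcode_ne {i j : ℕ} (hij : i < j) (hj : j < ℓ) : code i ≠ code j := by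
    intro heq
    obtain ⟨hcard, htraj⟩ := Prod.mk.inj heq
    have hstart : s i = s j := congrFun htraj 0
    rw [← hstart] at htraj
    exact traj_ne_of_V_lt hswitch hij hj hcard (hs i j hij hj) htraj
  have hinj : Set.InjOn code (Finset.range ℓ) := by
    intro i hi j hj heq
    rw [Finset.coe_range, Set.mem_Iio] at hi hj
    rcases lt_trichotomy i j with hij | hij | hij
    exacts [absurd heq (hcode_ne hij hj), hij, absurd heq.symm (hcode_ne hij hi)]
  have hmaps : ∀ i ∈ Finset.range ℓ,
      code i ∈ Finset.range (Fintype.card S + 1) ×ˢ M.trajectories := fun i _ =>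
    Finset.mem_product.mpr ⟨Finset.mem_range_succ_iff.mpr (Finset.card_le_univ _),
      traj_mem_trajectories _ _⟩
  simpa only [Finset.card_product, Finset.card_range] using
    Finset.card_le_card_of_injOn code hmaps hinj

end Trajectories

end DMDP

theorem stmt_17_general {S A : Type*} [Fintype S] [Fintype A] [Nonempty S] (M : DMDP S A) {ℓ : ℕ}
    {π : ℕ → S → A} (hchain : ∀ i, i + 1 < ℓ → M.PLt (π i) (π (i + 1)))
    (hswitch : ∀ i, i + 1 < ℓ → M.BestParallelSwitch (π i) (π (i + 1))) :
    (ℓ : ℝ) ≤ ((Fintype.card S : ℝ) + 1) * (Fintype.card S : ℝ) ^ 2 * (Fintype.card A : ℝ) *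
      ((Fintype.card A + 1).factorial : ℝ) ^
        (((Fintype.card S : ℝ) - 1) / ((Fintype.card A : ℝ) + 1)) :=
  calc (ℓ : ℝ)
      ≤ (Fintype.card S + 1) * M.trajectories.card := by
        exact_mod_cast DMDP.length_le_card_add_one_mul_card_trajectories hchain hswitch
    _ ≤ (Fintype.card S + 1) * _ :=
      mul_le_mul_of_nonneg_left M.card_trajectories_le (by positivity)
    _ = _ := by ring

theorem stmt_17 {S A : Type*} [Fintype S] [Fintype A]
    (M : DMDP S A) (n k : ℕ) (hn : Fintype.card S = n) (hk : Fintype.card A = k)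
    (hn2 : 2 ≤ n) (hk2 : 2 ≤ k)
    (ℓ : ℕ) (π : ℕ → S → A)
    (hchain : ∀ i, i + 1 < ℓ → M.PLt (π i) (π (i + 1)))
    (hstep : ∀ i, i + 1 < ℓ → M.MaxGainStep (π i) (π (i + 1))) :
    (ℓ : ℝ) ≤ ((n : ℝ) + 1) * (n : ℝ) ^ 2 * (k : ℝ) *
      (Nat.factorial (k + 1) : ℝ) ^ (((n : ℝ) - 1) / ((k : ℝ) + 1)) := by
  subst hn hk
  have : Nonempty S := Fintype.card_pos_iff.mp (by omega)
  exact stmt_17_general M hchain fun i hi => (hstep i hi).bestParallelSwitch
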